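/- arXiv:2203.00615 — 4 statements merged into one kernel-verified Lean document; each statement's English description precedes it below -/
import Mathlib

section
/- If θ is a regular infinite cardinal and X is a set with θ ≤ |X| and |X|^{<θ} = |X| (i.e., [X]^{<θ} has cardinality |X|), then C_{[X]^{<θ}} ≅T ⟨[X]^{<θ}, ⊆⟩. -/
open Cardinal

universe u v u' v'

/-- `F ⊆ X` is bounded with respect to the relational system `⟨X, Y, R⟩`:
some `y ∈ Y` satisfies `R x y` for all `x ∈ F`. -/
def RelBounded {X : Type u} {Y : Type v} (R : X → Y → Prop) (F : Set X) : Prop :=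
  ∃ y : Y, ∀ x ∈ F, R x y

/-- `E ⊆ Y` is dominating with respect to the relational system `⟨X, Y, R⟩`. -/
def RelDominating {X : Type u} {Y : Type v} (R : X → Y → Prop) (E : Set Y) : Prop :=
  ∀ x : X, ∃ y ∈ E, R x y

/-- The unbounding number `𝔟(R)`: the least cardinality of an `R`-unbounded set
(`⊤` when every set is `R`-bounded). -/
noncomputable def relb {X Y : Type u} (R : X → Y → Prop) : WithTop Cardinal.{u} :=
  sInf { c : WithTop Cardinal.{u} | ∃ F : Set X, ¬ RelBounded R F ∧ c = ↑(#F) }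

/-- The dominating number `𝔡(R)`: the least cardinality of an `R`-dominating set
(`⊤` when there is no `R`-dominating set). -/
noncomputable def reld {X Y : Type u} (R : X → Y → Prop) : WithTop Cardinal.{u} :=
  sInf { c : WithTop Cardinal.{u} | ∃ E : Set Y, RelDominating R E ∧ c = ↑(#E) }

/-- The dual relational system `R^⊥ = ⟨Y, X, ⊏^⊥⟩`, `y ⊏^⊥ x ↔ ¬ x ⊏ y`. -/
def RelDual {X : Type u} {Y : Type v} (R : X → Y → Prop) : Y → X → Prop := fun y x => ¬ R x y

/-- The Tukey order: there is a Tukey connection `(f, g) : R → R'`. -/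
def TukeyLE {X : Type u} {Y : Type v} {X' : Type u'} {Y' : Type v'}
    (R : X → Y → Prop) (R' : X' → Y' → Prop) : Prop :=
  ∃ (f : X → X') (g : Y' → Y), ∀ x y', R' (f x) y' → R x (g y')

/-- Tukey equivalence. -/
def TukeyEquiv {X : Type u} {Y : Type v} {X' : Type u'} {Y' : Type v'}
    (R : X → Y → Prop) (R' : X' → Y' → Prop) : Prop :=
  TukeyLE R R' ∧ TukeyLE R' R

/-- The additivity of a family `I` of subsets of `α`. -/
noncomputable def idealAdd {α : Type u} (I : Set (Set α)) : Cardinal.{u} :=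
  sInf { c : Cardinal.{u} | ∃ J : Set (Set α), J ⊆ I ∧ ⋃₀ J ∉ I ∧ c = #J }

/-- The covering number of a family `I` of subsets of `α`. -/
noncomputable def idealCov {α : Type u} (I : Set (Set α)) : Cardinal.{u} :=
  sInf { c : Cardinal.{u} | ∃ J : Set (Set α), J ⊆ I ∧ ⋃₀ J = Set.univ ∧ c = #J }

/-- The uniformity of a family `I` of subsets of `α`. -/
noncomputable def idealNon {α : Type u} (I : Set (Set α)) : Cardinal.{u} :=
  sInf { c : Cardinal.{u} | ∃ A : Set α, A ∉ I ∧ c = #A }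

/-- The cofinality of a family `I` of subsets of `α`. -/
noncomputable def idealCof {α : Type u} (I : Set (Set α)) : Cardinal.{u} :=
  sInf { c : Cardinal.{u} | ∃ J : Set (Set α), J ⊆ I ∧ (∀ A ∈ I, ∃ B ∈ J, A ⊆ B) ∧ c = #J }

/-!
A map `f` is the first half of a Tukey connection from `R` to `C_I` exactly when the preimages under
`f` of the members of `I` are `R`-bounded. When `θ` is regular, any fewer than `θ` members of
`[X]^{<θ}` have their union in `[X]^{<θ}` as an upper bound, so every injection `[X]^{<θ} → X`
has this property.
-/

section

variable {X : Type u} {Y : Type v} {R : X → Y → Prop}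

theorem tukeyLE_mem_iff {Z : Type u'} {p : Set Z → Prop} :
    TukeyLE R (fun (z : Z) (A : {A : Set Z // p A}) => z ∈ A.1) ↔
      ∃ f : X → Z, ∀ A, p A → RelBounded R (f ⁻¹' A) := by
  constructor
  · rintro ⟨f, g, hfg⟩
    exact ⟨f, fun A hA => ⟨g ⟨A, hA⟩, fun x => hfg x ⟨A, hA⟩⟩⟩
  · rintro ⟨f, hf⟩
    choose g hg using hf
    exact ⟨f, fun A => g A.1 A.2, fun x A => hg A.1 A.2 x⟩

theorem tukeyLE_mem_of_mk_le_of_relBounded {Z : Type u} {θ : Cardinal.{u}} (hXZ : #X ≤ #Z)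
    (hR : ∀ F : Set X, #F < θ → RelBounded R F) :
    TukeyLE R (fun (z : Z) (A : {A : Set Z // #A < θ}) => z ∈ A.1) := by
  obtain ⟨f⟩ := hXZ
  exact tukeyLE_mem_iff.2
    ⟨f, fun A hA => hR _ ((mk_preimage_of_injective f A f.injective).trans_lt hA)⟩

end

theorem tukeyLE_mem_subset {X : Type u} {p : Set X → Prop} (hp : ∀ x, p {x}) :
    TukeyLE (fun (x : X) (A : {A : Set X // p A}) => x ∈ A.1)
      (fun (A B : {A : Set X // p A}) => A.1 ⊆ B.1) :=
  ⟨fun x => ⟨{x}, hp x⟩, id, fun _ _ => Set.singleton_subset_iff.1⟩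

theorem relBounded_subset_of_mk_lt {X : Type u} {θ : Cardinal.{u}} (hθ : θ.IsRegular)
    (F : Set {A : Set X // #A < θ}) (hF : #F < θ) :
    RelBounded (fun (A B : {A : Set X // #A < θ}) => A.1 ⊆ B.1) F :=
  ⟨⟨⋃ A ∈ F, A.1, (card_biUnion_lt_iff_forall_of_isRegular hθ hF).2 fun A _ => A.2⟩,
    fun _ => Set.subset_biUnion_of_mem (u := Subtype.val)⟩

/-- If `θ` is regular infinite, `θ ≤ |X|` and `|X|^{<θ} = |X|`
(i.e. `[X]^{<θ}` has cardinality `|X|`), then `C_{[X]^{<θ}} ≅T ⟨[X]^{<θ}, ⊆⟩`. -/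
theorem stmt11 {X : Type u} (θ : Cardinal.{u}) (hreg : θ.IsRegular) (hXθ : θ ≤ #X)
    (hsmall : #{A : Set X | #A < θ} = #X) :
    TukeyEquiv (fun (x : X) (A : {A : Set X // #A < θ}) => x ∈ A.1)
               (fun (A B : {A : Set X // #A < θ}) => A.1 ⊆ B.1) := by
  have hsingleton (x : X) : #({x} : Set X) < θ := by
    rw [mk_singleton]
    exact one_lt_aleph0.trans_le hreg.aleph0_le
  exact ⟨tukeyLE_mem_subset hsingleton,
    tukeyLE_mem_of_mk_le_of_relBounded hsmall.le (relBounded_subset_of_mk_lt hreg)⟩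
end

section
/- Let R = ⟨X, Y, ⊏⟩ be a Polish relational system. Then ⟨X, M(X), ∈⟩ ≼T R, where M(X) is the σ-ideal of meager subsets of X. Consequently b(R) ≤ non(M(X)) and cov(M(X)) ≤ d(R). -/
open Cardinal

universe u v u' v'

/-!
Each section `{x | R x y}` is a countable union of nowhere dense sets, hence meagre, so the
identity on points together with `y ↦ {x | R x y}` is a Tukey connection from `⟨X, M(X), ∈⟩`
to `R`. A Tukey connection carries dominating sets of `R` to dominating sets of `⟨X, M(X), ∈⟩`
and, dually, unbounded sets of `⟨X, M(X), ∈⟩` to unbounded sets of `R`. In `⟨X, M(X), ∈⟩` the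
unbounded sets are the nonmeagre ones (the Baire category theorem guarantees that there are
some), and the dominating sets are the covers by meagre sets.
-/

/-- The relational system `⟨α, I, ∈⟩` attached to a family `I` of subsets of `α`; the second
component is encoded as the subtype of sets belonging to `I`. -/
def memRel {α : Type u} (I : Set (Set α)) : α → I → Prop := fun x A => x ∈ A.1

section Tukey

theorem TukeyLE.dual {X : Type u} {Y : Type v} {X' : Type u'} {Y' : Type v'}
    {R : X → Y → Prop} {R' : X' → Y' → Prop} (h : TukeyLE R R') :
    TukeyLE (RelDual R') (RelDual R) := by
  obtain ⟨f, g, hfg⟩ := h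
  exact ⟨g, f, fun y' x => mt (hfg x y')⟩

theorem not_relBounded_iff_relDominating_relDual {X : Type u} {Y : Type v} {R : X → Y → Prop}
    {F : Set X} : ¬ RelBounded R F ↔ RelDominating (RelDual R) F := by
  simp only [RelBounded, RelDominating, RelDual, not_exists, not_forall, exists_prop]

theorem relb_eq_reld_relDual {X Y : Type u} (R : X → Y → Prop) : relb R = reld (RelDual R) := by
  simp only [relb, reld, not_relBounded_iff_relDominating_relDual]

theorem RelDominating.image {X : Type u} {Y : Type v} {X' : Type u'} {Y' : Type v'}
    {R : X → Y → Prop} {R' : X' → Y' → Prop} {f : X → X'} {g : Y' → Y} {E : Set Y'}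
    (hE : RelDominating R' E) (hfg : ∀ x y', R' (f x) y' → R x (g y')) :
    RelDominating R (g '' E) := by
  intro x
  obtain ⟨y', hy', hxy'⟩ := hE (f x)
  exact ⟨g y', Set.mem_image_of_mem g hy', hfg x y' hxy'⟩

variable {X Y X' Y' : Type u} {R : X → Y → Prop} {R' : X' → Y' → Prop}

theorem TukeyLE.reld_le (h : TukeyLE R R') : reld R ≤ reld R' := by
  obtain ⟨f, g, hfg⟩ := h
  refine le_sInf ?_
  rintro _ ⟨E, hE, rfl⟩
  calc
    reld R ≤ ↑(#(g '' E)) := sInf_le ⟨g '' E, hE.image hfg, rfl⟩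
    _ ≤ ↑(#E) := WithTop.coe_le_coe.2 mk_image_le

theorem TukeyLE.relb_le (h : TukeyLE R R') : relb R' ≤ relb R := by
  simpa only [relb_eq_reld_relDual] using h.dual.reld_le

end Tukey

section Family

variable {α : Type u} {I : Set (Set α)}

theorem tukeyLE_memRel {Y : Type v} {R : α → Y → Prop} (hR : ∀ y, {x | R x y} ∈ I) :
    TukeyLE (memRel I) R :=
  ⟨id, fun y => ⟨{x | R x y}, hR y⟩, fun _ _ hxy => hxy⟩

theorem relBounded_memRel_iff (hI : IsLowerSet I) {A : Set α} :
    RelBounded (memRel I) A ↔ A ∈ I :=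
  ⟨fun ⟨B, hAB⟩ => hI hAB B.2, fun hA => ⟨⟨A, hA⟩, fun _ hx => hx⟩⟩

theorem relb_memRel (hI : IsLowerSet I) (huniv : Set.univ ∉ I) :
    relb (memRel I) = ↑(idealNon I) := by
  have hne : {c : Cardinal.{u} | ∃ A : Set α, A ∉ I ∧ c = #A}.Nonempty :=
    ⟨_, Set.univ, huniv, rfl⟩
  rw [idealNon, WithTop.coe_sInf' hne (OrderBot.bddBelow _), relb]
  congr 1
  ext c
  simp only [relBounded_memRel_iff hI, Set.mem_image, Set.mem_ofPred_eq]
  grind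

theorem RelDominating.sUnion_image_val_eq_univ {E : Set I} (hE : RelDominating (memRel I) E) :
    ⋃₀ (Subtype.val '' E) = Set.univ := by
  refine Set.eq_univ_of_forall fun x => ?_
  obtain ⟨A, hA, hxA⟩ := hE x
  exact ⟨A, Set.mem_image_of_mem _ hA, hxA⟩

theorem idealCov_le_reld_memRel (I : Set (Set α)) : ↑(idealCov I) ≤ reld (memRel I) := by
  refine le_sInf ?_
  rintro _ ⟨E, hE, rfl⟩
  refine WithTop.coe_le_coe.2 ?_
  calc
    idealCov I ≤ #(Subtype.val '' E) :=
      csInf_le' ⟨_, Subtype.coe_image_subset I E, hE.sUnion_image_val_eq_univ, rfl⟩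
    _ ≤ #E := mk_image_le

end Family

theorem stmt15_general {X Y : Type u} [Nonempty X] [TopologicalSpace X] [BaireSpace X]
    (R : X → Y → Prop) (hR : ∀ y, IsMeagre {x | R x y}) :
    TukeyLE (memRel {A : Set X | IsMeagre A}) R ∧
    relb R ≤ ↑(idealNon {A : Set X | IsMeagre A}) ∧
    ↑(idealCov {A : Set X | IsMeagre A}) ≤ reld R := by
  have hTukey : TukeyLE (memRel {A : Set X | IsMeagre A}) R := tukeyLE_memRel hR
  have hlower : IsLowerSet {A : Set X | IsMeagre A} := fun _ _ hBA hA => hA.mono hBA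
  have huniv : ¬ IsMeagre (Set.univ : Set X) :=
    not_isMeagre_of_isOpen isOpen_univ Set.univ_nonempty
  exact ⟨hTukey, hTukey.relb_le.trans_eq (relb_memRel hlower huniv),
    (idealCov_le_reld_memRel _).trans hTukey.reld_le⟩

/-- For a Polish relational system `R = ⟨X, Y, ⊏⟩` (with `X` a nonempty
perfect Polish space, `Y` a nonempty analytic subset of a Polish space `Z`, and `⊏`
an increasing union of closed sets `C n ⊆ X × Z` whose sections at points of `Y` are
closed nowhere dense), `⟨X, M(X), ∈⟩ ≼T R`; consequently `𝔟(R) ≤ non(M(X))` and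
`cov(M(X)) ≤ 𝔡(R)`, where `M(X)` is the meager ideal of `X`. -/
theorem stmt15 {X Z : Type u} [Nonempty X] [TopologicalSpace X] [PolishSpace X]
    [TopologicalSpace Z] [PolishSpace Z]
    (hperf : Perfect (Set.univ : Set X))
    (Y : Set Z) (hYne : Y.Nonempty) (hYan : MeasureTheory.AnalyticSet Y)
    (R : X → Z → Prop)
    (C : ℕ → Set (X × Z)) (hmono : Monotone C) (hclosed : ∀ n, IsClosed (C n))
    (hsec : ∀ n, ∀ y ∈ Y, IsClosed {x : X | (x, y) ∈ C n} ∧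
      IsNowhereDense {x : X | (x, y) ∈ C n})
    (hR : ∀ (x : X) (z : Z), R x z ↔ ∃ n, (x, z) ∈ C n) :
    TukeyLE (fun (x : X) (A : {A : Set X // IsMeagre A}) => x ∈ A.1)
      (fun (x : X) (y : Y) => R x (y : Z)) ∧
    relb (fun (x : X) (y : Y) => R x (y : Z)) ≤ ↑(idealNon {A : Set X | IsMeagre A}) ∧
    ↑(idealCov {A : Set X | IsMeagre A}) ≤ reld (fun (x : X) (y : Y) => R x (y : Z)) :=
  stmt15_general _ fun y => by
    simpa only [hR, Set.ofPred_exists] using isMeagre_iUnion fun n => (hsec n y y.2).2.isMeagre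
end

section
/- The relational system Mg := ⟨2^ω, Ξ, ∈•⟩ is Tukey equivalent to C_M := ⟨2^ω, M, ∈⟩, where M is the σ-ideal of meager subsets of Cantor space 2^ω. Consequently b(Mg) = non(M) and d(Mg) = cov(M). -/
open Cardinal

universe u v u' v'

/-- `l` is an initial segment of the infinite binary sequence `x`. -/
def ListPrefixOfSeq (l : List Bool) (x : ℕ → Bool) : Prop :=
  ∀ (i : ℕ) (h : i < l.length), l.get ⟨i, h⟩ = x i

/-- The set `Ξ` of functions `f : 2^{<ω} → 2^{<ω}` with `s ⊆ f s` for all `s`. -/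
def XiSet : Set (List Bool → List Bool) := {f | ∀ s : List Bool, s <+: f s}

/-- The relational system `Mg = ⟨2^ω, Ξ, ∈•⟩`:
`x ∈• f` iff `{s : f s is an initial segment of x}` is finite. -/
def MgRel (x : ℕ → Bool) (f : XiSet) : Prop :=
  {s : List Bool | ListPrefixOfSeq ((f : List Bool → List Bool) s) x}.Finite

/-!
Every relational system `⟨X, Y, R⟩` is Tukey equivalent to membership in its `R`-bounded sets, and
when `X` is `R`-unbounded while its singletons are `R`-bounded, `𝔟(R)` and `𝔡(R)` are the uniformity
and the covering number of the family of `R`-bounded sets. It therefore suffices to see that a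
subset of `2^ω` is `Mg`-bounded if and only if it is meagre; that `2^ω` is `Mg`-unbounded is then
the Baire category theorem.

* Given `f ∈ Ξ`, the sequence `x` fails `x ∈• f` if and only if `x` extends `f s` for arbitrarily
  long `s`. This holds on an intersection of countably many open sets, each of which is dense
  because `f s` extends `s`.
* Given a decreasing sequence of dense open sets `U n` with `A` disjoint from their intersection,
  let `f s` be an extension of `s` whose cylinder lies in `U |s|`. A point outside `U n` cannot
  extend `f s` once `|s| ≥ n`, so every `x ∈ A` satisfies `x ∈• f`.
-/

section RelationalSystem

theorem tukeyEquiv_mem_relBounded {X : Type u} {Y : Type v} (R : X → Y → Prop) :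
    TukeyEquiv R (fun (x : X) (A : {A : Set X // RelBounded R A}) => x ∈ A.1) := by
  constructor
  · choose bound h_bound using fun A : {A : Set X // RelBounded R A} => A.2
    exact ⟨id, bound, fun x A => h_bound A x⟩
  · exact ⟨id, fun y => ⟨{x | R x y}, y, fun _ => id⟩, fun _ _ => id⟩

variable {X Y : Type u} {R : X → Y → Prop}

theorem relb_eq_idealNon_relBounded (hR : ¬ RelBounded R Set.univ) :
    relb R = ↑(idealNon {A : Set X | RelBounded R A}) := by
  have h_nonempty : {c : Cardinal.{u} | ∃ A ∉ {A | RelBounded R A}, c = #A}.Nonempty :=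
    ⟨_, Set.univ, hR, rfl⟩
  rw [idealNon, WithTop.coe_sInf' h_nonempty (OrderBot.bddBelow _), relb]
  congr 1
  ext c
  exact ⟨fun ⟨A, hA, hc⟩ => ⟨#A, ⟨A, hA, rfl⟩, hc.symm⟩,
    fun ⟨_, ⟨A, hA, hc⟩, h⟩ => ⟨A, hA, hc ▸ h.symm⟩⟩

theorem RelDominating.idealCov_le_mk {E : Set Y} (hE : RelDominating R E) :
    idealCov {A : Set X | RelBounded R A} ≤ #E := by
  refine le_trans (csInf_le' ⟨(fun y => {x | R x y}) '' E, ?_, ?_, rfl⟩) mk_image_le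
  · rintro _ ⟨y, -, rfl⟩
    exact ⟨y, fun _ => id⟩
  · refine Set.eq_univ_of_forall fun x => ?_
    obtain ⟨y, hy, hxy⟩ := hE x
    exact ⟨_, ⟨y, hy, rfl⟩, hxy⟩

theorem exists_relDominating_mk_le {J : Set (Set X)} (hJ : J ⊆ {A | RelBounded R A})
    (h_cover : ⋃₀ J = Set.univ) : ∃ E : Set Y, RelDominating R E ∧ #E ≤ #J := by
  choose bound h_bound using fun A : J => hJ A.2
  refine ⟨Set.range bound, fun x => ?_, mk_range_le⟩
  obtain ⟨A, hA, hx⟩ := Set.mem_sUnion.1 (h_cover ▸ Set.mem_univ x)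
  exact ⟨_, ⟨⟨A, hA⟩, rfl⟩, h_bound ⟨A, hA⟩ x hx⟩

theorem reld_eq_idealCov_relBounded (hR : ∀ x, ∃ y, R x y) :
    reld R = ↑(idealCov {A : Set X | RelBounded R A}) := by
  apply le_antisymm
  · have h_nonempty : {c : Cardinal.{u} | ∃ J : Set (Set X),
        J ⊆ {A | RelBounded R A} ∧ ⋃₀ J = Set.univ ∧ c = #J}.Nonempty := by
      refine ⟨_, _, subset_rfl, Set.eq_univ_of_forall fun x => ?_, rfl⟩
      obtain ⟨y, hxy⟩ := hR x
      exact ⟨{x | R x y}, ⟨y, fun _ => id⟩, hxy⟩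
    obtain ⟨J, hJ, h_cover, h_card⟩ := csInf_mem h_nonempty
    obtain ⟨E, hE, hEJ⟩ := exists_relDominating_mk_le hJ h_cover
    exact le_trans (sInf_le ⟨E, hE, rfl⟩) (WithTop.coe_le_coe.2 (hEJ.trans_eq h_card.symm))
  · refine le_sInf ?_
    rintro _ ⟨E, hE, rfl⟩
    exact WithTop.coe_le_coe.2 (hE.idealCov_le_mk)

end RelationalSystem

section Dense

variable {X : Type u} [TopologicalSpace X]

theorem isOpen_and_dense_dissipate {U : ℕ → Set X} (hU : ∀ n, IsOpen (U n) ∧ Dense (U n)) (n : ℕ) :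
    IsOpen (Set.dissipate U n) ∧ Dense (Set.dissipate U n) := by
  induction n with
  | zero => simpa using hU 0
  | succ n ih =>
    rw [Set.dissipate_succ]
    exact ⟨ih.1.inter (hU (n + 1)).1, ih.2.inter_of_isOpen_left (hU (n + 1)).2 ih.1⟩

theorem exists_antitone_dense_open_of_isMeagre {A : Set X} (hA : IsMeagre A) :
    ∃ U : ℕ → Set X, Antitone U ∧ (∀ n, IsOpen (U n) ∧ Dense (U n)) ∧ Disjoint A (⋂ n, U n) := by
  obtain ⟨S, hS_open, hS_dense, hS_countable, hSA⟩ := mem_residual_iff.1 hA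
  obtain ⟨U, hU⟩ := (hS_countable.insert Set.univ).exists_eq_range (Set.insert_nonempty _ _)
  have hU_dense (n : ℕ) : IsOpen (U n) ∧ Dense (U n) := by
    have hUn : U n ∈ insert Set.univ S := hU ▸ Set.mem_range_self n
    rcases hUn with h | h
    · exact h ▸ And.intro isOpen_univ dense_univ
    · exact ⟨hS_open _ h, hS_dense _ h⟩
  refine ⟨Set.dissipate U, Set.antitone_dissipate, isOpen_and_dense_dissipate hU_dense, ?_⟩
  rw [Set.iInter_dissipate, ← Set.sInter_range, ← hU, Set.sInter_insert, Set.univ_inter]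
  exact Set.disjoint_left.2 fun x hxA hxS => hSA hxS hxA

end Dense

/-- The cylinder `[l] ⊆ 2^ω` of the sequences with initial segment `l`. -/
def listCylinder (l : List Bool) : Set (ℕ → Bool) := {x | ListPrefixOfSeq l x}

theorem listCylinder_eq_cylinder (l : List Bool) :
    listCylinder l = PiNat.cylinder (fun i => l.getD i false) l.length := by
  ext x
  refine forall₂_congr fun i hi => ?_
  simp [hi, eq_comm]

theorem listCylinder_ofFn (x : ℕ → Bool) (n : ℕ) :
    listCylinder (List.ofFn fun i : Fin n => x i) = PiNat.cylinder x n := by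
  ext y
  simp [listCylinder, ListPrefixOfSeq, eq_comm]

theorem isTopologicalBasis_range_listCylinder :
    TopologicalSpace.IsTopologicalBasis (Set.range listCylinder) := by
  convert PiNat.isTopologicalBasis_cylinders fun _ => Bool using 1
  ext C
  constructor
  · rintro ⟨l, rfl⟩
    exact ⟨_, _, listCylinder_eq_cylinder l⟩
  · rintro ⟨x, n, rfl⟩
    exact ⟨_, listCylinder_ofFn x n⟩

theorem isOpen_listCylinder (l : List Bool) : IsOpen (listCylinder l) :=
  isTopologicalBasis_range_listCylinder.isOpen ⟨l, rfl⟩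

theorem listCylinder_nonempty (l : List Bool) : (listCylinder l).Nonempty := by
  rw [listCylinder_eq_cylinder]
  exact ⟨_, PiNat.self_mem_cylinder _ _⟩

theorem listCylinder_subset_of_prefix {l l' : List Bool} (h : l <+: l') :
    listCylinder l' ⊆ listCylinder l := by
  intro x hx i hi
  rw [← hx i (hi.trans_le h.length_le)]
  exact h.getElem hi

theorem prefix_of_mem_listCylinder {l l' : List Bool} {x : ℕ → Bool} (hl : x ∈ listCylinder l)
    (hl' : x ∈ listCylinder l') (h : l.length ≤ l'.length) : l <+: l' :=
  List.prefix_iff_getElem.2 ⟨h, fun i hi => (hl i hi).trans (hl' i (hi.trans_le h)).symm⟩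

theorem exists_prefix_listCylinder_subset {U : Set (ℕ → Bool)} (hU : IsOpen U ∧ Dense U)
    (s : List Bool) : ∃ t, s <+: t ∧ listCylinder t ⊆ U := by
  obtain ⟨x, hxs, hxU⟩ :=
    hU.2.inter_open_nonempty _ (isOpen_listCylinder s) (listCylinder_nonempty s)
  obtain ⟨_, ⟨t, rfl⟩, hxt, htU⟩ :=
    isTopologicalBasis_range_listCylinder.exists_subset_of_mem_open hxU hU.1
  rcases le_total s.length t.length with h | h
  · exact ⟨t, prefix_of_mem_listCylinder hxs hxt h, htU⟩
  · have hts : t <+: s := prefix_of_mem_listCylinder hxt hxs h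
    exact ⟨s, List.prefix_rfl, (listCylinder_subset_of_prefix hts).trans htU⟩

theorem dense_iUnion_listCylinder {f : List Bool → List Bool} (hf : f ∈ XiSet) (n : ℕ) :
    Dense (⋃ (s : List Bool) (_ : n ≤ s.length), listCylinder (f s)) := by
  rw [isTopologicalBasis_range_listCylinder.dense_iff]
  rintro _ ⟨s, rfl⟩ -
  have hst : s <+: f (s ++ List.replicate n false) := (List.prefix_append _ _).trans (hf _)
  obtain ⟨x, hx⟩ := listCylinder_nonempty (f (s ++ List.replicate n false))
  exact ⟨x, listCylinder_subset_of_prefix hst hx, Set.mem_iUnion₂_of_mem (by simp) hx⟩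

theorem finite_iff_exists_length_lt {α : Type u} [Finite α] {S : Set (List α)} :
    S.Finite ↔ ∃ n, ∀ s ∈ S, s.length < n := by
  constructor
  · intro hS
    obtain ⟨n, hn⟩ := (hS.image List.length).bddAbove
    exact ⟨n + 1, fun s hs => Nat.lt_succ_of_le (hn ⟨s, hs, rfl⟩)⟩
  · rintro ⟨n, hn⟩
    exact (List.finite_length_lt α n).subset hn

theorem mgRel_iff {x : ℕ → Bool} {f : XiSet} :
    MgRel x f ↔ ∃ n, ∀ s : List Bool, n ≤ s.length → x ∉ listCylinder (f.1 s) := by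
  simp only [MgRel, finite_iff_exists_length_lt, ← not_le]
  exact exists_congr fun n => forall_congr' fun s => imp_not_comm

theorem isMeagre_setOf_mgRel (f : XiSet) : IsMeagre {x | MgRel x f} := by
  have h_residual (n : ℕ) :
      (⋃ (s : List Bool) (_ : n ≤ s.length), listCylinder (f.1 s)) ∈ residual (ℕ → Bool) :=
    residual_of_dense_open (isOpen_biUnion fun s _ => isOpen_listCylinder _)
      (dense_iUnion_listCylinder f.2 n)
  refine Filter.mem_of_superset (countable_iInter_mem.2 h_residual) fun x hx hxf => ?_
  obtain ⟨n, hn⟩ := mgRel_iff.1 hxf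
  obtain ⟨s, hs, hxs⟩ := Set.mem_iUnion₂.1 (Set.mem_iInter.1 hx n)
  exact hn s hs hxs

theorem relBounded_mgRel_of_isMeagre {A : Set (ℕ → Bool)} (hA : IsMeagre A) :
    RelBounded MgRel A := by
  obtain ⟨U, hU_anti, hU_dense, hAU⟩ := exists_antitone_dense_open_of_isMeagre hA
  choose f hf hfU using fun s : List Bool =>
    exists_prefix_listCylinder_subset (hU_dense s.length) s
  refine ⟨⟨f, hf⟩, fun x hx => mgRel_iff.2 ?_⟩
  obtain ⟨n, hn⟩ : ∃ n, x ∉ U n := by simpa using Set.disjoint_left.1 hAU hx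
  exact ⟨n, fun s hs hxs => hn (hU_anti hs (hfU s hxs))⟩

theorem isMeagre_iff_relBounded_mgRel {A : Set (ℕ → Bool)} :
    IsMeagre A ↔ RelBounded MgRel A :=
  ⟨relBounded_mgRel_of_isMeagre, fun ⟨f, hf⟩ => (isMeagre_setOf_mgRel f).mono hf⟩

theorem not_relBounded_mgRel_univ : ¬ RelBounded MgRel Set.univ := by
  rw [← isMeagre_iff_relBounded_mgRel]
  exact not_isMeagre_of_isOpen isOpen_univ Set.univ_nonempty

theorem exists_mgRel (x : ℕ → Bool) : ∃ f : XiSet, MgRel x f := by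
  refine ⟨⟨fun s => s ++ [!x s.length], fun s => List.prefix_append _ _⟩,
    mgRel_iff.2 ⟨0, fun s _ hs => ?_⟩⟩
  simpa using hs s.length (by simp)

/-- `Mg ≅T C_M = ⟨2^ω, M, ∈⟩` where `M` is the meager ideal of Cantor
space `2^ω`; consequently `𝔟(Mg) = non(M)` and `𝔡(Mg) = cov(M)`. -/
theorem stmt16 :
    TukeyEquiv MgRel
      (fun (x : ℕ → Bool) (A : {A : Set (ℕ → Bool) // IsMeagre A}) => x ∈ A.1) ∧
    relb MgRel = ↑(idealNon {A : Set (ℕ → Bool) | IsMeagre A}) ∧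
    reld MgRel = ↑(idealCov {A : Set (ℕ → Bool) | IsMeagre A}) := by
  have isMeagre_eq : (IsMeagre : Set (ℕ → Bool) → Prop) = RelBounded MgRel :=
    funext fun _ => propext isMeagre_iff_relBounded_mgRel
  rw [isMeagre_eq]
  exact ⟨tukeyEquiv_mem_relBounded MgRel, relb_eq_idealNon_relBounded not_relBounded_mgRel_univ,
    reld_eq_idealCov_relBounded exists_mgRel⟩
end

section
/- Let ⟨T, ≤T⟩ be a directed preorder and let ⟨N_t : t ∈ T⟩ be a family of sets that is monotone (t ≤T t' implies N_t ⊆ N_{t'}); set N := ⋃_{t∈T} N_t. Let K = ⟨A, B, ⊲⟩ be a relational system with A ∩ N nonempty, and assume that for every t ∈ T there exists y ∈ B ∩ N with x ⊲ y for all x ∈ A ∩ N_t (i.e., A ∩ N_t is (K ∩ N)-bounded). Then K ∩ N := ⟨A ∩ N, B ∩ N, ⊲⟩ ≼T ⟨T, T, ≤T⟩. -/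
open Cardinal

universe u v u' v'

/-!
Send each `x ∈ A ∩ N` to an index `t` with `x ∈ N t`, and each index `t` to a bound of `A ∩ N t`.
If the index of `x` is at most `t`, then `x ∈ N t` by monotonicity, so the bound at `t` lies
above `x`.
-/

section RelationalSystem

variable {X Y X' Y' : Type*} {R : X → Y → Prop}

theorem RelBounded.mono {F G : Set X} (hG : RelBounded R G) (hFG : F ⊆ G) : RelBounded R F :=
  hG.imp fun _ hy x hx => hy x (hFG hx)

theorem tukeyLE_iff_exists_forall_relBounded {R' : X' → Y' → Prop} :
    TukeyLE R R' ↔ ∃ f : X → X', ∀ y', RelBounded R {x | R' (f x) y'} := by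
  constructor
  · rintro ⟨f, g, hfg⟩
    exact ⟨f, fun y' => ⟨g y', fun x hx => hfg x y' hx⟩⟩
  · rintro ⟨f, hf⟩
    choose g hg using hf
    exact ⟨f, g, fun x y' hx => hg y' x hx⟩

theorem tukeyLE_of_monotone_cover {T : Type*} [LE T] {M : T → Set X}
    (hmono : ∀ ⦃s t : T⦄, s ≤ t → M s ⊆ M t) (hcover : ∀ x, ∃ t, x ∈ M t)
    (hbdd : ∀ t, RelBounded R (M t)) :
    TukeyLE R (fun s t : T => s ≤ t) := by
  choose index mem_index using hcover
  exact tukeyLE_iff_exists_forall_relBounded.mpr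
    ⟨index, fun t => (hbdd t).mono fun x hx => hmono hx (mem_index x)⟩

theorem relBounded_preimage_val_iff {C F : Set X} {D : Set Y} :
    RelBounded (fun (x : C) (y : D) => R x y) (Subtype.val ⁻¹' F) ↔
      ∃ y ∈ D, ∀ x ∈ C ∩ F, R x y := by
  simp only [RelBounded, Subtype.exists, Subtype.forall, Set.mem_preimage, Set.mem_inter_iff,
    and_imp, exists_prop]

end RelationalSystem

theorem stmt18_general {T α β : Type*} [LE T] {N : T → Set α}
    (hmono : ∀ ⦃s t : T⦄, s ≤ t → N s ⊆ N t) {A : Set α} {D : Set β} {lhd : α → β → Prop}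
    (hbd : ∀ t : T, ∃ y ∈ D, ∀ x ∈ A ∩ N t, lhd x y) :
    TukeyLE (fun (x : ↥(A ∩ ⋃ t : T, N t)) (y : ↥D) => lhd x y) (fun s t : T => s ≤ t) := by
  have hcover (x : ↥(A ∩ ⋃ t : T, N t)) : ∃ t, (x : α) ∈ N t := Set.mem_iUnion.mp x.2.2
  refine tukeyLE_of_monotone_cover (M := fun t => Subtype.val ⁻¹' N t)
    (fun _ _ hst => Set.preimage_mono (hmono hst)) hcover fun t => ?_
  obtain ⟨y, hyD, hy⟩ := hbd t
  exact relBounded_preimage_val_iff.mpr ⟨y, hyD, fun x hx => hy x ⟨hx.1.1, hx.2⟩⟩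

/-- Let `T` be a directed preorder and `⟨N_t : t ∈ T⟩` a monotone family of
sets with union `N`. If `K = ⟨A, B, ⊲⟩` is a relational system with `A ∩ N` nonempty such
that each `A ∩ N_t` is `(K ∩ N)`-bounded, then `K ∩ N ≼T ⟨T, T, ≤⟩`. -/
theorem stmt18 {T : Type u} [Preorder T] {α : Type v}
    (hdir : ∀ s t : T, ∃ w : T, s ≤ w ∧ t ≤ w)
    (Nfam : T → Set α) (hmono : ∀ ⦃s t : T⦄, s ≤ t → Nfam s ⊆ Nfam t)
    (A B : Set α) (lhd : α → α → Prop)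
    (hAne : (A ∩ ⋃ t : T, Nfam t).Nonempty)
    (hbd : ∀ t : T, ∃ y ∈ B ∩ ⋃ w : T, Nfam w, ∀ x ∈ A ∩ Nfam t, lhd x y) :
    TukeyLE
      (fun (x : ↥(A ∩ ⋃ t : T, Nfam t)) (y : ↥(B ∩ ⋃ t : T, Nfam t)) => lhd x y)
      (fun s t : T => s ≤ t) :=
  stmt18_general hmono hbd
end
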